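/- Let T be a finite tree and let A be an independent set of vertices of T each of which has degree exactly 2 in T. Then T has a matching that saturates every vertex of A (i.e., every vertex of A is an endpoint of some matching edge). -/

import Mathlib

open SimpleGraph

/-- The degree of a vertex, as `Nat.card` of its neighbor set. -/
noncomputable def vdeg {V : Type*} (G : SimpleGraph V) (v : V) : ℕ :=
  Nat.card (G.neighborSet v)

/-- `G` has maximum degree exactly `k`. -/
def MaxDegreeEq {V : Type*} (G : SimpleGraph V) (k : ℕ) : Prop :=
  (∀ v, vdeg G v ≤ k) ∧ ∃ v, vdeg G v = k

/-- `G` admits a total `k`-coloring: a coloring of vertices and edges with `k` colors such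
that adjacent vertices get distinct colors, edges sharing an endpoint get distinct colors,
and each edge gets a color distinct from those of its endpoints. -/
def TotallyColorable {V : Type*} (G : SimpleGraph V) (k : ℕ) : Prop :=
  ∃ (cv : V → Fin k) (ce : Sym2 V → Fin k),
    (∀ ⦃u v⦄, G.Adj u v → cv u ≠ cv v) ∧
    (∀ e₁ ∈ G.edgeSet, ∀ e₂ ∈ G.edgeSet, e₁ ≠ e₂ → (∃ x, x ∈ e₁ ∧ x ∈ e₂) →
      ce e₁ ≠ ce e₂) ∧
    (∀ ⦃u v⦄, G.Adj u v → ce s(u, v) ≠ cv u)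

/-- The diamond: `K₄` minus one edge. -/
def diamondGraph : SimpleGraph (Fin 4) :=
  SimpleGraph.fromEdgeSet {s(0, 1), s(0, 2), s(0, 3), s(1, 2), s(1, 3)}

/-- The house: a `4`-cycle `1 2 3 4` and a triangle `0 1 4` sharing exactly the edge `{1,4}`
(equivalently, a `5`-cycle plus one chord). -/
def houseGraph : SimpleGraph (Fin 5) :=
  SimpleGraph.fromEdgeSet {s(0, 1), s(1, 2), s(2, 3), s(3, 4), s(4, 0), s(1, 4)}

/-- `G` contains a (not necessarily induced) subgraph isomorphic to `H`. -/
def ContainsCopy {α β : Type*} (H : SimpleGraph α) (G : SimpleGraph β) : Prop :=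
  ∃ f : α → β, Function.Injective f ∧ ∀ ⦃u v⦄, H.Adj u v → G.Adj (f u) (f v)

/-- `v` is incident with two distinct `4`-cycles of `G` that share an edge. -/
def TwoAdjacentFourCyclesAt {V : Type*} (G : SimpleGraph V) (v : V) : Prop :=
  ∃ (c₁ c₂ : G.Walk v v), c₁.IsCycle ∧ c₂.IsCycle ∧ c₁.length = 4 ∧ c₂.length = 4 ∧
    {e | e ∈ c₁.edges} ≠ {e | e ∈ c₂.edges} ∧ ∃ e, e ∈ c₁.edges ∧ e ∈ c₂.edges

/-- `v` is incident with three pairwise distinct cycles of `G`, of lengths `p`, `q`, `ℓ`. -/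
def ThreeCyclesAt {V : Type*} (G : SimpleGraph V) (v : V) (p q ℓ : ℕ) : Prop :=
  ∃ (c₁ c₂ c₃ : G.Walk v v), c₁.IsCycle ∧ c₂.IsCycle ∧ c₃.IsCycle ∧
    c₁.length = p ∧ c₂.length = q ∧ c₃.length = ℓ ∧
    {e | e ∈ c₁.edges} ≠ {e | e ∈ c₂.edges} ∧
    {e | e ∈ c₁.edges} ≠ {e | e ∈ c₃.edges} ∧
    {e | e ∈ c₂.edges} ≠ {e | e ∈ c₃.edges}

/-- Every `6`-vertex of `G` is not incident with two `4`-cycles sharing an edge, or is not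
incident with three cycles of sizes `p, q, ℓ` for any `{p,q,ℓ} ∈ {{3,4,4},{3,3,4}}`. -/
def Good6Vertices {V : Type*} (G : SimpleGraph V) : Prop :=
  ∀ v, vdeg G v = 6 →
    (¬ TwoAdjacentFourCyclesAt G v) ∨
    (∀ p q ℓ : ℕ, (({p, q, ℓ} : Multiset ℕ) = {3, 4, 4} ∨ ({p, q, ℓ} : Multiset ℕ) = {3, 3, 4}) →
      ¬ ThreeCyclesAt G v p q ℓ)

/-- Reversal of darts, as a permutation. -/
def dartRev {V : Type*} (G : SimpleGraph V) : Equiv.Perm G.Dart :=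
  Function.Involutive.toPerm SimpleGraph.Dart.symm SimpleGraph.Dart.symm_involutive

/-- A rotation system (combinatorial embedding) of `G`: a permutation of the darts whose
orbits are exactly the sets of darts emanating from each single vertex. -/
structure RotationSystem {V : Type*} (G : SimpleGraph V) where
  σ : Equiv.Perm G.Dart
  tail_fixed : ∀ d : G.Dart, (σ d).fst = d.fst
  vertex_cycles : ∀ d d' : G.Dart, d.fst = d'.fst → σ.SameCycle d d'

namespace RotationSystem

variable {V : Type*} {G : SimpleGraph V}

/-- The face-tracing permutation of a rotation system. -/
def φ (R : RotationSystem G) : Equiv.Perm G.Dart :=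
  R.σ * dartRev G

/-- Two darts lie on the same face iff they are in the same orbit of the face-tracing
permutation. -/
def faceSetoid (R : RotationSystem G) : Setoid G.Dart where
  r := R.φ.SameCycle
  iseqv := ⟨fun d => Equiv.Perm.SameCycle.refl _ d, Equiv.Perm.SameCycle.symm,
    Equiv.Perm.SameCycle.trans⟩

/-- The faces of the embedding: orbits of the face-tracing permutation. -/
def Faces (R : RotationSystem G) : Type _ :=
  Quotient R.faceSetoid

/-- The number of faces of the embedding. -/
noncomputable def numFaces (R : RotationSystem G) : ℕ :=
  Nat.card R.Faces

/-- The darts of the face containing the dart `d`. -/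
def faceDarts (R : RotationSystem G) (d : G.Dart) : Set G.Dart :=
  {d' | R.φ.SameCycle d d'}

/-- The degree (length of the boundary walk, cut edges counted twice) of the face
containing the dart `d`. -/
noncomputable def faceDeg (R : RotationSystem G) (d : G.Dart) : ℕ :=
  (R.faceDarts d).ncard

/-- The vertex `v` is incident with the face containing the dart `d`. -/
def FaceIncident (R : RotationSystem G) (v : V) (d : G.Dart) : Prop :=
  ∃ d' ∈ R.faceDarts d, d'.fst = v

/-- A rotation system is a plane embedding when it satisfies Euler's formula
`|V| - |E| + |F| = 2` on each connected component, i.e. `|V| + |F| = |E| + 2c`. -/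
def IsPlanarEmbedding [Fintype V] (R : RotationSystem G) : Prop :=
  Fintype.card V + R.numFaces = Nat.card G.edgeSet + 2 * Nat.card G.ConnectedComponent

end RotationSystem

/-- A graph is planar if it admits a plane embedding. -/
def IsPlanar {V : Type*} [Fintype V] (G : SimpleGraph V) : Prop :=
  ∃ R : RotationSystem G, R.IsPlanarEmbedding

/-- Conditions (1), (2), (3) on graphs in Theorem 1: planar of maximum degree 6, with no
diamond and no house subgraph, and every 6-vertex not incident with two adjacent 4-cycles
or not incident with three cycles of sizes in `{{3,4,4},{3,3,4}}`. -/
def GoodGraph {V : Type*} [Fintype V] (G : SimpleGraph V) : Prop :=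
  IsPlanar G ∧ MaxDegreeEq G 6 ∧ ¬ ContainsCopy diamondGraph G ∧
    ¬ ContainsCopy houseGraph G ∧ Good6Vertices G

/-- `H` is a minimal counterexample to the main theorem: it satisfies conditions (1)–(3),
is not totally 7-colorable, and minimizes `|V| + |E|` among all such graphs. -/
def MinimalCounterexample {V : Type*} [Fintype V] (H : SimpleGraph V) : Prop :=
  GoodGraph H ∧ ¬ TotallyColorable H 7 ∧
    ∀ (n : ℕ) (G : SimpleGraph (Fin n)), GoodGraph G → ¬ TotallyColorable G 7 →
      Fintype.card V + Nat.card H.edgeSet ≤ n + Nat.card G.edgeSet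

theorem unique_parent_aux {V : Type*} (T : SimpleGraph V) (hT : T.IsTree) (r w v v' : V)
    (h : T.Adj v w) (h' : T.Adj v' w) (hd : T.dist r w = T.dist r v + 1)
    (hd' : T.dist r w = T.dist r v' + 1) : v = v' := by
  obtain ⟨p, hp⟩ := hT.1.exists_walk_length_eq_dist r v
  obtain ⟨q, hq⟩ := hT.1.exists_walk_length_eq_dist r v'
  have h1 : (p.concat h).IsPath :=
    Walk.isPath_of_length_eq_dist _ (by rw [Walk.length_concat, hp, hd])
  have h2 : (q.concat h').IsPath :=
    Walk.isPath_of_length_eq_dist _ (by rw [Walk.length_concat, hq, hd'])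
  have h3 := (hT.existsUnique_path r w).unique h1 h2
  have h4 := congrArg Walk.penultimate h3
  simpa using h4

theorem exists_child_aux {V : Type*} (T : SimpleGraph V) (hT : T.IsTree) (r a : V)
    (ha : vdeg T a = 2) : ∃ w, T.Adj a w ∧ T.dist r w = T.dist r a + 1 := by
  have hn : (T.neighborSet a).ncard = 2 := ha
  obtain ⟨x, y, hxy, hs⟩ := Set.ncard_eq_two.1 hn
  have hx : T.Adj a x := by
    have : x ∈ T.neighborSet a := by rw [hs]; simp
    exact this
  have hy : T.Adj a y := by
    have : y ∈ T.neighborSet a := by rw [hs]; simp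
    exact this
  rcases hT.dist_eq_dist_add_one_of_adj r hx with h1 | h1
  · rcases hT.dist_eq_dist_add_one_of_adj r hy with h2 | h2
    · exact absurd (unique_parent_aux T hT r a x y hx.symm hy.symm h1 h2) hxy
    · exact ⟨y, hy, h2⟩
  · exact ⟨x, hx, h1⟩

/-- Every finite tree has a matching saturating any given independent set of vertices of
degree exactly 2. -/
theorem tree_matching_saturating_independent_degree_two
    {V : Type*} [Fintype V] (T : SimpleGraph V) (hT : T.IsTree)
    (A : Set V) (hind : ∀ u ∈ A, ∀ v ∈ A, ¬ T.Adj u v)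
    (hdeg : ∀ a ∈ A, vdeg T a = 2) :
    ∃ M : T.Subgraph, M.IsMatching ∧ A ⊆ M.verts := by
  obtain ⟨r⟩ := hT.1.nonempty
  have hc : ∀ a, ∃ w, a ∈ A → T.Adj a w ∧ T.dist r w = T.dist r a + 1 := by
    intro a
    by_cases ha : a ∈ A
    · obtain ⟨w, hw⟩ := exists_child_aux T hT r a (hdeg a ha)
      exact ⟨w, fun _ => hw⟩
    · exact ⟨a, fun h => absurd h ha⟩
  choose f hf using hc
  have hinj : ∀ a ∈ A, ∀ b ∈ A, f a = f b → a = b := by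
    intro a ha b hb hab
    refine unique_parent_aux T hT r (f a) a b (hf a ha).1 ?_ (hf a ha).2 ?_
    · rw [hab]; exact (hf b hb).1
    · rw [hab]; exact (hf b hb).2
  have hnot : ∀ a ∈ A, f a ∉ A := fun a ha h => hind a ha _ h (hf a ha).1
  refine ⟨{ verts := A ∪ f '' A
            Adj := fun u v => (u ∈ A ∧ v = f u) ∨ (v ∈ A ∧ u = f v)
            adj_sub := ?_
            edge_vert := ?_
            symm := ?_ }, ?_, Set.subset_union_left⟩
  · rintro u v (⟨h, rfl⟩ | ⟨h, rfl⟩)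
    · exact (hf _ h).1
    · exact (hf _ h).1.symm
  · rintro u v (⟨h, rfl⟩ | ⟨h, rfl⟩)
    · exact Or.inl h
    · exact Or.inr ⟨_, h, rfl⟩
  · first
    | exact ⟨fun u v h => h.symm⟩
    | exact fun u v h => h.symm
  · rintro v (hv | ⟨a, ha, rfl⟩)
    · refine ⟨f v, Or.inl ⟨hv, rfl⟩, ?_⟩
      rintro w (⟨_, rfl⟩ | ⟨h, rfl⟩)
      · rfl
      · exact absurd hv (hnot _ h)
    · refine ⟨a, Or.inr ⟨ha, rfl⟩, ?_⟩
      rintro w (⟨h, _⟩ | ⟨h, h2⟩)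
      · exact absurd h (hnot _ ha)
      · exact (hinj _ ha _ h h2).symm
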